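/- For all positive integers k and m and every tree T of order m, every k-connected finite simple graph G with minimum degree δ(G) ≥ 2(k − 1 + m)² + m − 1 contains a subgraph T′ isomorphic to T such that G − V(T′) is still k-connected. -/

import Mathlib

/-- A graph `G` is `k`-connected if it has at least `k+1` vertices and
deleting any set of fewer than `k` vertices leaves a connected graph. -/
def KConnected {V : Type*} (G : SimpleGraph V) (k : ℕ) : Prop :=
  k + 1 ≤ Nat.card V ∧
    ∀ X : Finset V, X.card < k → (G.induce ((X : Set V)ᶜ)).Connected

/-- truncated number of neighbours outside `U` -/
def cw {V : Type*} [Fintype V] [DecidableEq V] (G : SimpleGraph V) [DecidableRel G.Adj]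
    (n : ℕ) (U : Finset V) (v : V) : ℕ := min n (G.neighborFinset v \ U).card

theorem conn_cut {V : Type*} {H : SimpleGraph V} (h : H.Connected) (A : Set V)
    (hA : A.Nonempty) (hB : ∃ b, b ∉ A) : ∃ a ∈ A, ∃ b, b ∉ A ∧ H.Adj a b := by
  obtain ⟨a, ha⟩ := hA
  obtain ⟨b, hb⟩ := hB
  obtain ⟨p⟩ := h.preconnected a b
  obtain ⟨d, -, h1, h2⟩ := p.exists_boundary_dart A ha hb
  exact ⟨_, h1, _, h2, d.adj⟩

theorem conn_of_cut {V : Type*} {H : SimpleGraph V} [Nonempty V]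
    (h : ∀ A : Set V, A.Nonempty → (∃ b, b ∉ A) → ∃ a ∈ A, ∃ b, b ∉ A ∧ H.Adj a b) :
    H.Connected := by
  rw [SimpleGraph.connected_iff]
  refine ⟨fun u v => ?_, inferInstance⟩
  by_contra hv
  obtain ⟨a, ha, b, hb, hab⟩ := h {x | H.Reachable u x} ⟨u, SimpleGraph.Reachable.refl u⟩ ⟨v, hv⟩
  exact hb (SimpleGraph.Reachable.trans ha hab.reachable)

theorem tree_embed {V : Type*} [Fintype V] [DecidableEq V] (G : SimpleGraph V)
    [DecidableRel G.Adj] (I : Finset V) (hI : I.Nonempty) (m : ℕ) :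
    ∀ {W : Type*} [Fintype W] (T : SimpleGraph W), T.IsTree → Fintype.card W = m →
    (∀ v ∈ I, m - 1 ≤ (G.neighborFinset v ∩ I).card) →
    ∃ f : W → V, Function.Injective f ∧ (∀ a b, T.Adj a b → G.Adj (f a) (f b)) ∧
      ∀ a, f a ∈ I := by
  induction m with
  | zero =>
    intro W _ T hT hc
    have := hT.connected.nonempty
    exact absurd hc Fintype.card_ne_zero
  | succ m ih =>
    intro W _ T hT hc hd
    classical
    rcases subsingleton_or_nontrivial W with hs | hs
    · obtain ⟨x, hx⟩ := hI
      exact ⟨fun _ => x, fun a b _ => Subsingleton.elim a b,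
        fun a b hab => absurd (Subsingleton.elim a b) hab.ne, fun _ => hx⟩
    · obtain ⟨v, hv⟩ := hT.exists_vert_degree_one_of_nontrivial
      have hcon := hT.connected.induce_compl_singleton_of_degree_eq_one hv
      obtain ⟨u, huv, hu⟩ := SimpleGraph.degree_eq_one_iff_existsUnique_adj.mp hv
      have hc' : Fintype.card ({v}ᶜ : Set W) = m := by
        rw [Fintype.card_compl_set]; simp [hc]
      obtain ⟨f, hf, hadj, hfI⟩ := ih (T.induce ({v}ᶜ : Set W)) ⟨hcon, hT.isAcyclic.induce _⟩ hc'
        (fun x hx => by have := hd x hx; omega)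
      have huv' : u ∈ ({v}ᶜ : Set W) := by simpa using huv.ne'
      set R : Finset V := (Finset.univ.image f).erase (f ⟨u, huv'⟩) with hR
      have hRc : R.card = m - 1 := by
        rw [hR, Finset.card_erase_of_mem (by simp), Finset.card_image_of_injective _ hf,
          Finset.card_univ, hc']
      have hmpos : 0 < m := by rw [← hc']; exact Fintype.card_pos_iff.mpr ⟨⟨u, huv'⟩⟩
      have hlt : R.card < (G.neighborFinset (f ⟨u, huv'⟩) ∩ I).card := by
        have := hd _ (hfI ⟨u, huv'⟩); omega
      obtain ⟨y, hy, hyR⟩ := Finset.exists_mem_notMem_of_card_lt_card hlt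
      simp only [Finset.mem_inter, SimpleGraph.mem_neighborFinset] at hy
      have hyf : ∀ a, f a ≠ y := by
        intro a ha
        apply hyR
        rw [hR, Finset.mem_erase]
        exact ⟨hy.1.ne', by simp [← ha]⟩
      have key : ∀ a, a ∈ ({v}ᶜ : Set W) ↔ a ≠ v := fun a => by simp
      refine ⟨fun a => if h : a = v then y else f ⟨a, (key a).2 h⟩, ?_, ?_, ?_⟩
      · intro a b hab
        dsimp only at hab
        split_ifs at hab with h1 h2 h2
        · rw [h1, h2]
        · exact absurd hab.symm (hyf _)
        · exact absurd hab (hyf _)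
        · exact congrArg Subtype.val (hf hab)
      · intro a b hab
        dsimp only
        split_ifs with h1 h2 h2
        · subst h1; subst h2; exact absurd rfl hab.ne
        · subst h1
          obtain rfl := hu b hab
          exact hy.1.symm
        · subst h2
          obtain rfl := hu a hab.symm
          exact hy.1
        · exact hadj _ _ hab
      · intro a
        dsimp only
        split_ifs
        · exact hy.2
        · exact hfI _

section
variable {V : Type*} [Fintype V] [DecidableEq V] (G : SimpleGraph V) [DecidableRel G.Adj]

/-- admissible sets -/
def Adm (n : ℕ) (U : Finset V) : Prop :=
  (∃ v ∈ U, G.neighborFinset v ⊆ U) ∧ ∑ v ∈ U, cw G n U v < 2 * n ^ 2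

theorem step (n : ℕ) (hn : 1 ≤ n) (hδ : ∀ v, 2 * n ^ 2 ≤ G.degree v) (U : Finset V)
    (hU : Adm G n U) (hmin : ∀ U', Adm G n U' → U.card ≤ U'.card)
    (P X Y : Finset V) (hPX : Disjoint P X) (hPY : Disjoint P Y) (hXY : Disjoint X Y)
    (hun : P ∪ X ∪ Y = U) (hX : X.card ≤ n) (hP : P.Nonempty) (hY : Y.Nonempty)
    (hno : ∀ p ∈ P, ∀ y ∈ Y, ¬ G.Adj p y)
    (hle : ∑ v ∈ P, cw G n U v ≤ ∑ v ∈ Y, cw G n U v) : False := by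
  obtain ⟨⟨u, huU, hu⟩, hw⟩ := hU
  have hdPXY : Disjoint (P ∪ X) Y := Finset.disjoint_union_left.2 ⟨hPY, hXY⟩
  have hsum : ∑ v ∈ U, cw G n U v
      = ∑ v ∈ P, cw G n U v + ∑ v ∈ X, cw G n U v + ∑ v ∈ Y, cw G n U v := by
    rw [← hun, Finset.sum_union hdPXY, Finset.sum_union hPX]
  have hcard : U.card = P.card + X.card + Y.card := by
    rw [← hun, Finset.card_union_of_disjoint hdPXY, Finset.card_union_of_disjoint hPX]
  have hPc := hP.card_pos
  have hYc := hY.card_pos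
  have memU : ∀ x, x ∈ U ↔ (x ∈ P ∨ x ∈ X) ∨ x ∈ Y := by
    intro x; rw [← hun]; simp [or_assoc]
  -- outside sets agree
  have outP : ∀ v ∈ P, G.neighborFinset v \ (P ∪ X) = G.neighborFinset v \ U := by
    intro v hv; ext x
    have := hno v hv x
    simp only [Finset.mem_sdiff, SimpleGraph.mem_neighborFinset, Finset.mem_union, memU]
    tauto
  have outY : ∀ v ∈ Y, G.neighborFinset v \ (X ∪ Y) = G.neighborFinset v \ U := by
    intro v hv; ext x
    have := fun hx => hno x hx v hv
    have h2 := G.adj_comm v x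
    simp only [Finset.mem_sdiff, SimpleGraph.mem_neighborFinset, Finset.mem_union, memU]
    tauto
  have cP : ∀ v ∈ P, cw G n (P ∪ X) v = cw G n U v := fun v hv => by
    simp only [cw, outP v hv]
  have cY : ∀ v ∈ Y, cw G n (X ∪ Y) v = cw G n U v := fun v hv => by
    simp only [cw, outY v hv]
  have bX : ∑ v ∈ X, cw G n (P ∪ X) v ≤ n * n := by
    calc _ ≤ X.card * n := by
          rw [← smul_eq_mul]; exact Finset.sum_le_card_nsmul _ _ _ (fun v _ => min_le_left _ _)
      _ ≤ _ := Nat.mul_le_mul_right _ hX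
  have w1 : ∑ v ∈ P ∪ X, cw G n (P ∪ X) v < 2 * n ^ 2 := by
    have e1 : ∑ v ∈ P, cw G n (P ∪ X) v = ∑ v ∈ P, cw G n U v := Finset.sum_congr rfl cP
    have e2 : n * n = n ^ 2 := by ring
    rw [Finset.sum_union hPX]
    omega
  have noint1 : ∀ v ∈ P ∪ X, ¬ G.neighborFinset v ⊆ P ∪ X := by
    intro v hv hs
    have := hmin _ ⟨⟨v, hv, hs⟩, w1⟩
    rw [hcard, Finset.card_union_of_disjoint hPX] at this
    omega
  have pos1 : ∀ v ∈ P, 1 ≤ cw G n U v := by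
    intro v hv
    have h1 := noint1 v (Finset.mem_union_left _ hv)
    rw [← Finset.sdiff_nonempty, outP v hv, ← Finset.card_pos] at h1
    exact le_min hn h1
  have cardP : P.card ≤ ∑ v ∈ P, cw G n U v := by
    have := Finset.card_nsmul_le_sum P (cw G n U) 1 pos1
    simpa using this
  have full : ∀ v ∈ P, n ≤ cw G n U v := by
    intro v hv
    refine le_min le_rfl ?_
    rw [← outP v hv]
    have h1 := Finset.card_sdiff_add_card (G.neighborFinset v) (P ∪ X)
    have h2 : (insert v (G.neighborFinset v)).card ≤ (G.neighborFinset v ∪ (P ∪ X)).card := by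
      apply Finset.card_le_card
      intro x; simp only [Finset.mem_insert, Finset.mem_union]
      rintro (rfl | h)
      · tauto
      · tauto
    rw [Finset.card_insert_of_notMem (by simp), SimpleGraph.card_neighborFinset_eq_degree] at h2
    have h3 := hδ v
    rw [Finset.card_union_of_disjoint hPX] at h1
    have h4 : P.card + 1 ≤ n ^ 2 := by omega
    have h5 : 2 * n ≤ n ^ 2 + 2 := by nlinarith [sq_nonneg ((n : ℤ) - 1), Nat.pos_of_ne_zero (by omega : n ≠ 0)]
    omega
  have sumP : P.card * n ≤ ∑ v ∈ P, cw G n U v := by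
    rw [← smul_eq_mul]; exact Finset.card_nsmul_le_sum P (cw G n U) n full
  have cX : ∀ v ∈ X, cw G n (X ∪ Y) v ≤ cw G n U v + P.card := by
    intro v hv
    have : (G.neighborFinset v \ (X ∪ Y)).card ≤ (G.neighborFinset v \ U).card + P.card := by
      refine le_trans (Finset.card_le_card ?_) (Finset.card_union_le _ _)
      intro x
      simp only [Finset.mem_sdiff, Finset.mem_union, memU]
      tauto
    simp only [cw]
    omega
  have bX2 : ∑ v ∈ X, cw G n (X ∪ Y) v ≤ ∑ v ∈ X, cw G n U v + n * P.card := by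
    refine (Finset.sum_le_sum cX).trans ?_
    rw [Finset.sum_add_distrib, Finset.sum_const, smul_eq_mul]
    exact Nat.add_le_add_left (Nat.mul_le_mul_right _ hX) _
  have w2 : ∑ v ∈ X ∪ Y, cw G n (X ∪ Y) v < 2 * n ^ 2 := by
    have e1 : ∑ v ∈ Y, cw G n (X ∪ Y) v = ∑ v ∈ Y, cw G n U v := Finset.sum_congr rfl cY
    rw [Finset.sum_union hXY]
    have := mul_comm n P.card
    omega
  have noint2 : ∀ v ∈ X ∪ Y, ¬ G.neighborFinset v ⊆ X ∪ Y := by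
    intro v hv hs
    have := hmin _ ⟨⟨v, hv, hs⟩, w2⟩
    rw [hcard, Finset.card_union_of_disjoint hXY] at this
    omega
  have pos2 : ∀ v ∈ Y, 1 ≤ cw G n U v := by
    intro v hv
    have h1 := noint2 v (Finset.mem_union_right _ hv)
    rw [← Finset.sdiff_nonempty, outY v hv, ← Finset.card_pos] at h1
    exact le_min hn h1
  have cardY : Y.card ≤ ∑ v ∈ Y, cw G n U v := by
    have := Finset.card_nsmul_le_sum Y (cw G n U) 1 pos2
    simpa using this
  have big : 2 * n ^ 2 + 1 ≤ U.card := by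
    have h2 : (insert u (G.neighborFinset u)).card ≤ U.card := by
      apply Finset.card_le_card
      intro x; simp only [Finset.mem_insert]
      rintro (rfl | h)
      · exact huU
      · exact hu h
    rw [Finset.card_insert_of_notMem (by simp), SimpleGraph.card_neighborFinset_eq_degree] at h2
    have := hδ u
    omega
  have fin : P.card + n ≤ P.card * n + 1 := by nlinarith
  omega

theorem core [Nonempty V] (n : ℕ) (hn : 1 ≤ n) (hδ : ∀ v, 2 * n ^ 2 ≤ G.degree v) :
    ∃ U : Finset V, Adm G n U ∧ ∀ P X Y : Finset V, Disjoint P X → Disjoint P Y → Disjoint X Y →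
      P ∪ X ∪ Y = U → X.card ≤ n → P.Nonempty → Y.Nonempty →
      ∃ p ∈ P, ∃ y ∈ Y, G.Adj p y := by
  classical
  have huniv : Adm G n Finset.univ := by
    refine ⟨⟨Classical.arbitrary V, by simp, by simp⟩, ?_⟩
    have : ∑ v, cw G n Finset.univ v = 0 := by
      apply Finset.sum_eq_zero; intro v _; simp [cw]
    rw [this]; positivity
  obtain ⟨U, hU, hmin⟩ := exists_minimalFor_of_wellFoundedLT (Adm G n) Finset.card ⟨_, huniv⟩
  have hmin' : ∀ U', Adm G n U' → U.card ≤ U'.card := by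
    intro U' h'
    rcases le_total U.card U'.card with h | h
    · exact h
    · exact hmin h' h
  refine ⟨U, hU, ?_⟩
  intro P X Y h1 h2 h3 h4 h5 h6 h7
  by_contra hno
  push Not at hno
  rcases le_total (∑ v ∈ P, cw G n U v) (∑ v ∈ Y, cw G n U v) with h | h
  · exact step G n hn hδ U hU hmin' P X Y h1 h2 h3 h4 h5 h6 h7 hno h
  · exact step G n hn hδ U hU hmin' Y X P h3.symm h2.symm h1.symm
      (by rw [← h4]; ext x; simp; tauto) h5 h7 h6 (fun y hy p hp h => hno p hp y hy h.symm) h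

end

/-- For all positive integers `k, m` and every tree `T` of order `m`, every
`k`-connected graph `G` with `δ(G) ≥ 2(k - 1 + m)² + m - 1` contains a
subgraph `T' ≅ T` such that `G - V(T')` is still `k`-connected. -/
theorem stmt_11 {V W : Type*} [Fintype V] [DecidableEq V] [Fintype W]
    (G : SimpleGraph V) [DecidableRel G.Adj] (k m : ℕ) (hk : 0 < k) (hm : 0 < m)
    (T : SimpleGraph W) (hT : T.IsTree) (hTcard : Fintype.card W = m)
    (hG : KConnected G k)
    (hδ : ∀ v : V, 2 * (k - 1 + m) ^ 2 + m - 1 ≤ G.degree v) :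
    ∃ f : W → V, Function.Injective f ∧
      (∀ a b : W, T.Adj a b → G.Adj (f a) (f b)) ∧
      KConnected (G.induce ((Set.range f)ᶜ)) k := by
  classical
  obtain ⟨n, hn⟩ : ∃ n, n = k - 1 + m := ⟨_, rfl⟩
  rw [← hn] at hδ
  have hn1 : 1 ≤ n := by omega
  have hV : Nonempty V := by
    have := hG.1
    have h2 : 0 < Nat.card V := by omega
    exact (Nat.card_pos_iff.1 h2).1
  obtain ⟨U, ⟨⟨u, huU, hu⟩, hw⟩, hsep⟩ := core G n hn1 (fun v => by have := hδ v; omega)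
  set I : Finset V := U.filter (fun v => G.neighborFinset v ⊆ U) with hI
  have hbd : (U \ I).card < 2 * n ^ 2 := by
    refine lt_of_le_of_lt ?_ hw
    have h1 : (U \ I).card ≤ ∑ v ∈ U \ I, cw G n U v := by
      have := Finset.card_nsmul_le_sum (U \ I) (cw G n U) 1 (by
        intro v hv
        simp only [hI, Finset.mem_sdiff, Finset.mem_filter, not_and] at hv
        have h1 := hv.2 hv.1
        rw [← Finset.sdiff_nonempty, ← Finset.card_pos] at h1
        exact le_min hn1 h1)
      simpa using this
    exact h1.trans (Finset.sum_le_sum_of_subset Finset.sdiff_subset)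
  obtain ⟨f, hf, hadj, hfI⟩ := tree_embed G I ⟨u, by simp [hI, huU, hu]⟩ m T hT hTcard (by
    intro v hv
    have h1 : G.neighborFinset v ⊆ (G.neighborFinset v ∩ I) ∪ (U \ I) := by
      intro x hx
      have : x ∈ U := (Finset.mem_filter.1 hv).2 hx
      simp only [Finset.mem_union, Finset.mem_inter, Finset.mem_sdiff]
      tauto
    have h2 := (Finset.card_le_card h1).trans (Finset.card_union_le _ _)
    rw [SimpleGraph.card_neighborFinset_eq_degree] at h2
    have := hδ v
    omega)
  refine ⟨f, hf, hadj, ?_⟩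
  have hfU : ∀ a, f a ∈ U := fun a => (Finset.mem_filter.1 (hfI a)).1
  have hfN : ∀ a x, G.Adj (f a) x → x ∈ U := fun a x h =>
    (Finset.mem_filter.1 (hfI a)).2 (by simpa using h)
  set R : Finset V := Finset.univ.image f with hR
  have hRc : R.card = m := by
    rw [hR, Finset.card_image_of_injective _ hf, Finset.card_univ, hTcard]
  have hRm : ∀ x, x ∈ R ↔ x ∈ Set.range f := by intro x; simp [hR]
  have hcard : k + 1 ≤ Nat.card ((Set.range f)ᶜ : Set V) := by
    have h1 : Nat.card ((Set.range f)ᶜ : Set V) = Fintype.card V - m := by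
      rw [Nat.card_eq_fintype_card, Fintype.card_compl_set, Set.card_range_of_injective hf, hTcard]
    have h2 := G.degree_lt_card_verts u
    have h3 := hδ u
    have h4 : n + 1 ≤ 2 * n ^ 2 := by nlinarith
    omega
  refine ⟨hcard, ?_⟩
  intro X hX
  set S : Finset V := X.map (Function.Embedding.subtype _) with hS
  have hSc : S.card = X.card := Finset.card_map _
  have hSm : ∀ x : ((Set.range f)ᶜ : Set V), x.1 ∈ S ↔ x ∈ X := by
    intro x
    refine ⟨fun h => ?_, fun h => Finset.mem_map.2 ⟨x, h, rfl⟩⟩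
    obtain ⟨y, hy, hyx⟩ := Finset.mem_map.1 h
    have : y = x := Subtype.ext hyx
    exact this ▸ hy
  have hne : Nonempty ((X : Set ((Set.range f)ᶜ : Set V))ᶜ : Set _) := by
    by_contra hcon
    have : X = Finset.univ := by
      ext x; simp only [Finset.mem_univ, iff_true]
      by_contra hx
      exact hcon ⟨⟨x, by simpa using hx⟩⟩
    rw [this, Finset.card_univ, ← Nat.card_eq_fintype_card] at hX
    omega
  apply conn_of_cut
  intro A hA hB
  by_contra hno
  push Not at hno
  -- transfer to sets of V
  set A' : Finset V := Finset.univ.filter (fun v => ∃ a ∈ A, a.1.1 = v) with hA'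
  set B' : Finset V := Finset.univ.filter (fun v => ∃ a, a ∉ A ∧ a.1.1 = v) with hB'
  have hA'ne : A'.Nonempty := by
    obtain ⟨a, ha⟩ := hA; exact ⟨a.1.1, by simp only [hA', Finset.mem_filter]; exact ⟨by simp, a, ha, rfl⟩⟩
  have hB'ne : B'.Nonempty := by
    obtain ⟨a, ha⟩ := hB; exact ⟨a.1.1, by simp only [hB', Finset.mem_filter]; exact ⟨by simp, a, ha, rfl⟩⟩
  have hABno : ∀ a ∈ A', ∀ b ∈ B', ¬ G.Adj a b := by
    intro a0 ha0 b0 hb0 hab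
    obtain ⟨-, a, ha, rfl⟩ := Finset.mem_filter.1 ha0
    obtain ⟨-, b, hb, rfl⟩ := Finset.mem_filter.1 hb0
    exact hno a ha b hb hab
  have hABd : Disjoint A' B' := by
    rw [Finset.disjoint_left]
    intro x ha0 hb0
    obtain ⟨-, a, ha, h1⟩ := Finset.mem_filter.1 ha0
    obtain ⟨-, b, hb, h2⟩ := Finset.mem_filter.1 hb0
    have : a = b := Subtype.ext (Subtype.ext (h1.trans h2.symm))
    exact hb (this ▸ ha)
  have hout : ∀ x, x ∈ A' ∨ x ∈ B' → x ∉ R ∧ x ∉ S := by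
    have gen : ∀ a : ((X : Set ((Set.range f)ᶜ : Set V))ᶜ : Set _), a.1.1 ∉ R ∧ a.1.1 ∉ S := by
      intro a
      refine ⟨fun h => a.1.2 ((hRm _).1 h), fun h => a.2 ?_⟩
      exact (hSm _).1 h
    rintro x (h | h)
    · obtain ⟨-, a, ha, rfl⟩ := Finset.mem_filter.1 h; exact gen a
    · obtain ⟨-, a, ha, rfl⟩ := Finset.mem_filter.1 h; exact gen a
  have hcov : ∀ x, x ∉ R → x ∉ S → x ∈ A' ∨ x ∈ B' := by
    intro x h1 h2
    have h1' : x ∈ (Set.range f)ᶜ := fun h => h1 ((hRm x).2 h)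
    have h2' : (⟨x, h1'⟩ : ((Set.range f)ᶜ : Set V)) ∈ (X : Set ((Set.range f)ᶜ : Set V))ᶜ :=
      fun h => h2 ((hSm ⟨x, h1'⟩).2 h)
    by_cases h : (⟨⟨x, h1'⟩, h2'⟩ : ((X : Set ((Set.range f)ᶜ : Set V))ᶜ : Set _)) ∈ A
    · left; exact Finset.mem_filter.2 ⟨by simp, _, h, rfl⟩
    · right; exact Finset.mem_filter.2 ⟨by simp, _, h, rfl⟩
  have hRS : Disjoint R S := by
    rw [Finset.disjoint_left]
    intro x h1 h2
    obtain ⟨y, -, rfl⟩ := Finset.mem_map.1 h2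
    exact y.2 ((hRm _).1 h1)
  clear_value A' B' R S
  clear hno hA hB
  -- the main step: a side disjoint from `U` is impossible
  have main : ∀ C D : Finset V, C.Nonempty → (∀ c ∈ C, c ∉ R ∧ c ∉ S) →
      (∀ c ∈ C, ∀ d ∈ D, ¬ G.Adj c d) → (∀ x, x ∉ R → x ∉ S → x ∈ C ∨ x ∈ D) →
      Disjoint C U → False := by
    intro C D hC hCo hCD hcv hCU
    have hconn := hG.2 S (by omega)
    obtain ⟨c, hc⟩ := hC
    obtain ⟨w⟩ := hT.connected.nonempty
    have hwS : f w ∉ S := Finset.disjoint_left.1 hRS ((hRm _).2 ⟨w, rfl⟩)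
    obtain ⟨a, ha, b, hb, hab⟩ := conn_cut hconn {x | x.1 ∈ C}
      ⟨⟨c, by simpa using (hCo c hc).2⟩, hc⟩
      ⟨⟨f w, by simpa using hwS⟩, fun h => (hCo _ h).1 ((hRm _).2 ⟨w, rfl⟩)⟩
    have hab' : G.Adj a.1 b.1 := hab
    have hbS : b.1 ∉ S := b.2
    by_cases hbR : b.1 ∈ R
    · obtain ⟨w', hw'⟩ := (hRm _).1 hbR
      rw [← hw'] at hab'
      exact Finset.disjoint_left.1 hCU ha (hfN _ _ hab'.symm)
    · rcases hcv _ hbR hbS with h | h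
      · exact hb h
      · exact hCD _ ha _ h hab'
  have hcases : Disjoint A' U ∨ Disjoint B' U := by
    by_contra hcon
    push Not at hcon
    obtain ⟨h1, h2⟩ := hcon
    rw [Finset.not_disjoint_iff] at h1 h2
    obtain ⟨a, ha, haU⟩ := h1
    obtain ⟨b, hb, hbU⟩ := h2
    obtain ⟨p, hp, y, hy, hpy⟩ := hsep (A' ∩ U) ((R ∪ S) ∩ U) (B' ∩ U)
      (by
        rw [Finset.disjoint_left]; intro x
        have := hout x
        simp only [Finset.mem_inter, Finset.mem_union]; grind)
      (by
        rw [Finset.disjoint_left] at hABd ⊢; intro x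
        have := @hABd x
        simp only [Finset.mem_inter]; grind)
      (by
        rw [Finset.disjoint_left]; intro x
        have := hout x
        simp only [Finset.mem_inter, Finset.mem_union]; grind)
      (by
        ext x
        have := hcov x
        simp only [Finset.mem_inter, Finset.mem_union]; grind)
      (by
        have h1 := Finset.card_le_card (Finset.inter_subset_left : (R ∪ S) ∩ U ⊆ R ∪ S)
        have h2 := Finset.card_union_le R S
        omega)
      ⟨a, Finset.mem_inter.2 ⟨ha, haU⟩⟩ ⟨b, Finset.mem_inter.2 ⟨hb, hbU⟩⟩
    exact hABno p (Finset.mem_inter.1 hp).1 y (Finset.mem_inter.1 hy).1 hpy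
  rcases hcases with h | h
  · exact main A' B' hA'ne (fun c hc => hout c (Or.inl hc)) hABno hcov h
  · exact main B' A' hB'ne (fun c hc => hout c (Or.inr hc))
      (fun c hc d hd hcd => hABno d hd c hc hcd.symm) (fun x h1 h2 => (hcov x h1 h2).symm) h
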